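/- arXiv:2212.00418 — 2 statements merged into one kernel-verified Lean document; each statement's English description precedes it below -/
import Mathlib

section
/- Let η ≥ 1 be an integer, let G be a finite simple graph, and let G' be a graph obtained from G as follows: for each i in a finite index set I there is a vertex u_i ∈ V(G) and a set J_i of η new vertices, where the sets J_i are pairwise disjoint and disjoint from V(G), such that in G' the set J_i ∪ {u_i} is a clique, no vertex of J_i has any neighbor outside J_i ∪ {u_i}, and the induced subgraph of G' on V(G) equals G. If S' is a connected η-treedepth deletion set of G' with S' ∩ V(G) ≠ ∅, then S' ∩ V(G) is a connected η-treedepth deletion set of G. -/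
open SimpleGraph Set

variable {V : Type*}

/-- The connected component of `x` inside the induced subgraph `G[S]`, as a subset of `V`. -/
def compIn (G : SimpleGraph V) (S : Set V) (x : V) : Set V :=
  {y | ∃ (hx : x ∈ S) (hy : y ∈ S), (G.induce S).Reachable ⟨x, hx⟩ ⟨y, hy⟩}

/-- `tdLE G n S` means that the treedepth of the induced subgraph `G[S]` is at most `n`,
following the recursive definition of treedepth: a graph has treedepth at most `n+1`
iff from every connected component one can delete a vertex leaving a graph of
treedepth at most `n`; only the empty graph has treedepth at most `0`. -/
def tdLE (G : SimpleGraph V) : ℕ → Set V → Prop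
  | 0, S => S = ∅
  | n+1, S => ∀ x ∈ S, ∃ v ∈ compIn G S x, tdLE G n (compIn G S x \ {v})

/-- The treedepth of the induced subgraph `G[S]`. -/
noncomputable def td (G : SimpleGraph V) (S : Set V) : ℕ :=
  sInf {n | tdLE G n S}

/-- `N_G(C)`: the set of vertices outside `C` having a neighbor in `C`. -/
def nbhd (G : SimpleGraph V) (C : Set V) : Set V :=
  {v | v ∉ C ∧ ∃ u ∈ C, G.Adj u v}

/-- `C` is a connected component of the induced subgraph `G[R]`. -/
def IsCompOf (G : SimpleGraph V) (R C : Set V) : Prop :=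
  ∃ x ∈ R, C = compIn G R x

/-- `S` is an `η`-treedepth deletion set of `G`: `td(G − S) ≤ η`. -/
def IsTDS (G : SimpleGraph V) (η : ℕ) (S : Set V) : Prop :=
  td G Sᶜ ≤ η

/-- `S` is a connected `η`-treedepth deletion set of `G`. -/
def IsCTDS (G : SimpleGraph V) (η : ℕ) (S : Set V) : Prop :=
  IsTDS G η S ∧ S.Nonempty ∧ (G.induce S).Connected

/-- A rooted forest with vertex set `A ⊆ V`, given by its (reflexive) ancestor relation:
`anc u v` means `u` is an ancestor of `v` (every vertex being an ancestor of itself). -/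
structure RootedForest (V : Type*) (A : Set V) where
  anc : V → V → Prop
  mem_left : ∀ {u v}, anc u v → u ∈ A
  mem_right : ∀ {u v}, anc u v → v ∈ A
  refl : ∀ v ∈ A, anc v v
  trans : ∀ {u v w}, anc u v → anc v w → anc u w
  antisymm : ∀ {u v}, anc u v → anc v u → u = v
  chain : ∀ {u w v}, anc u v → anc w v → anc u w ∨ anc w u

/-- Depth of a rooted forest: the maximum number of vertices on a root-to-leaf path,
i.e. the maximum number of ancestors of a vertex. -/
noncomputable def RootedForest.depth [Fintype V] {A : Set V} (F : RootedForest V A) : ℕ :=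
  Finset.univ.sup fun v : V => {u | F.anc u v}.ncard

/-- `F` is a treedepth decomposition of `G[A]`: the endpoints of every edge of `G[A]`
are in ancestor-descendant relation in `F`. -/
def IsTDDecompOn (G : SimpleGraph V) (A : Set V) (F : RootedForest V A) : Prop :=
  ∀ u v, u ∈ A → v ∈ A → G.Adj u v → F.anc u v ∨ F.anc v u

/-- `A` is an `(x,y)`-vertex cut in `G`: `A` avoids `x` and `y` and there is
no path from `x` to `y` in `G − A`. -/
def IsVertexCut (G : SimpleGraph V) (x y : V) (A : Set V) : Prop :=
  ∃ (hx : x ∈ Aᶜ) (hy : y ∈ Aᶜ), ¬ (G.induce Aᶜ).Reachable ⟨x, hx⟩ ⟨y, hy⟩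

/-- The weight of a subgraph: the sum of the weights of its edges. -/
noncomputable def subWeight (w : Sym2 V → ℕ) {G : SimpleGraph V} (T : G.Subgraph) : ℕ :=
  ∑ᶠ e ∈ T.edgeSet, w e

/-- The leaves (vertices with exactly one neighbor) of a subgraph. -/
def subLeaves {G : SimpleGraph V} (T : G.Subgraph) : Set V :=
  {v | (T.neighborSet v).ncard = 1}

/-- `T` is a Steiner tree for the terminal set `R` in `G`. -/
def IsSteinerTree (G : SimpleGraph V) (R : Set V) (T : G.Subgraph) : Prop :=
  T.coe.IsTree ∧ R ⊆ T.verts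

/-- `T` is a `t`-component for `R`: a tree with at most `t` leaves, all of which lie in `R`. -/
def IsTComponent (G : SimpleGraph V) (R : Set V) (t : ℕ) (T : G.Subgraph) : Prop :=
  T.coe.IsTree ∧ (subLeaves T).ncard ≤ t ∧ subLeaves T ⊆ R

theorem compIn_subset (G : SimpleGraph V) (S : Set V) (x : V) : compIn G S x ⊆ S := by
  rintro y ⟨_, hy, _⟩
  exact hy

theorem self_mem_compIn (G : SimpleGraph V) (S : Set V) (x : V) (hx : x ∈ S) :
    x ∈ compIn G S x := ⟨hx, hx, Reachable.refl _⟩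

theorem compIn_mono (G : SimpleGraph V) {S T : Set V} (h : S ⊆ T) (x : V) :
    compIn G S x ⊆ compIn G T x := by
  rintro y ⟨hx, hy, hr⟩
  exact ⟨h hx, h hy, hr.map (SimpleGraph.induceHomOfLE G h).toHom⟩

theorem tdLE_mono (G : SimpleGraph V) (n : ℕ) : ∀ {S T : Set V}, S ⊆ T → tdLE G n T →
    tdLE G n S := by
  induction n with
  | zero =>
    intro S T h hT
    exact Set.subset_eq_empty h hT
  | succ n ih =>
    intro S T h hT x hx
    obtain ⟨v, hv, hd⟩ := hT x (h hx)
    by_cases hvS : v ∈ compIn G S x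
    · exact ⟨v, hvS, ih (Set.diff_subset_diff_left (compIn_mono G h x)) hd⟩
    · refine ⟨x, self_mem_compIn G S x hx, ih ?_ hd⟩
      rintro y ⟨hy, _⟩
      refine ⟨compIn_mono G h x hy, ?_⟩
      rintro rfl
      exact hvS hy

theorem tdLE_of_card [Finite V] (G : SimpleGraph V) (n : ℕ) : ∀ {S : Set V}, S.ncard ≤ n →
    tdLE G n S := by
  induction n with
  | zero =>
    intro S h
    exact (Set.ncard_eq_zero (Set.toFinite S)).1 (Nat.le_zero.1 h)
  | succ n ih =>
    intro S h x hx
    refine ⟨x, self_mem_compIn G S x hx, ih ?_⟩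
    have h1 := Set.ncard_diff_singleton_lt_of_mem hx (Set.toFinite S)
    have h2 : (compIn G S x \ {x}).ncard ≤ (S \ {x}).ncard :=
      Set.ncard_le_ncard (Set.diff_subset_diff_left (compIn_subset G S x)) (Set.toFinite _)
    omega

theorem td_mono [Finite V] (G : SimpleGraph V) {S T : Set V} (h : S ⊆ T) : td G S ≤ td G T :=
  Nat.sInf_le (tdLE_mono G _ h (Nat.sInf_mem (s := {n | tdLE G n T}) ⟨_, tdLE_of_card G _ le_rfl⟩))

/-- `G'` is obtained from the graph `G = G'[A]` by attaching, for each `i`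
in a finite index set, a pendant clique `J i` of `η` new vertices to the vertex `u i ∈ A`
(so `J i ∪ {u i}` is a clique in `G'` and vertices of `J i` have no other neighbors),
the sets `J i` being pairwise disjoint and making up exactly `V(G') ∖ V(G)`.
If `S'` is a connected `η`-treedepth deletion set of `G'` with `S' ∩ V(G) ≠ ∅`, then
`S' ∩ V(G)` is a connected `η`-treedepth deletion set of `G`. -/
theorem stmt7 {V : Type*} [Fintype V] (η : ℕ) (hη : 1 ≤ η)
    (G' : SimpleGraph V) (A : Set V) {I : Type*} [Fintype I]
    (u : I → V) (J : I → Set V)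
    (huA : ∀ i, u i ∈ A)
    (hJA : ∀ i, Disjoint (J i) A)
    (hJJ : ∀ i j, i ≠ j → Disjoint (J i) (J j))
    (hJcard : ∀ i, (J i).ncard = η)
    (hclique : ∀ i, G'.IsClique (J i ∪ {u i}))
    (hpriv : ∀ i, ∀ w ∈ J i, ∀ x, G'.Adj w x → x ∈ J i ∪ {u i})
    (hcover : Aᶜ = ⋃ i, J i)
    (S' : Set V) (hS' : IsCTDS G' η S') (hmeet : (S' ∩ A).Nonempty) :
    td G' (A \ (S' ∩ A)) ≤ η ∧ (S' ∩ A).Nonempty ∧ (G'.induce (S' ∩ A)).Connected := by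
  obtain ⟨htd, -, hconn⟩ := hS'
  refine ⟨le_trans (td_mono G' ?_) htd, hmeet, ?_⟩
  · rintro x ⟨hxA, hx⟩ hxS
    exact hx ⟨hxS, hxA⟩
  obtain ⟨a, haS, haA⟩ := hmeet
  have key : ∀ y : S', Relation.ReflTransGen (G'.induce S').Adj ⟨a, haS⟩ y →
      (∀ h : y.1 ∈ A, (G'.induce (S' ∩ A)).Reachable ⟨a, haS, haA⟩ ⟨y.1, y.2, h⟩) ∧
      (∀ i, y.1 ∈ J i → ∃ h : u i ∈ S',
        (G'.induce (S' ∩ A)).Reachable ⟨a, haS, haA⟩ ⟨u i, h, huA i⟩) := by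
    intro y hy
    induction hy with
    | refl =>
      refine ⟨fun _ => Reachable.refl _, fun i hi => ?_⟩
      exact absurd haA (Set.disjoint_left.1 (hJA i) hi)
    | @tail y z _ hyz ih =>
      obtain ⟨y, hyS⟩ := y
      obtain ⟨z, hzS⟩ := z
      have hadj : G'.Adj y z := hyz
      dsimp only at ih ⊢
      by_cases hyA : y ∈ A
      · have hr := ih.1 hyA
        refine ⟨fun hzA => hr.trans (Adj.reachable ?_), fun i hi => ?_⟩
        · exact hadj
        · rcases hpriv i z hi y hadj.symm with h | h
          · exact absurd hyA (Set.disjoint_left.1 (hJA i) h)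
          · obtain rfl : y = u i := h
            exact ⟨hyS, hr⟩
      · have hyc : y ∈ ⋃ i, J i := hcover ▸ hyA
        obtain ⟨i, hi⟩ := Set.mem_iUnion.1 hyc
        obtain ⟨hu, hr⟩ := ih.2 i hi
        rcases hpriv i y hi z hadj with h | h
        · refine ⟨fun hzA => absurd hzA (Set.disjoint_left.1 (hJA i) h), fun j hj => ?_⟩
          by_cases hij : i = j
          · subst hij
            exact ⟨hu, hr⟩
          · exact absurd hj (Set.disjoint_left.1 (hJJ i j hij) h)
        · obtain rfl : z = u i := h
          exact ⟨fun _ => hr, fun j hj => absurd (huA i) (Set.disjoint_left.1 (hJA j) hj)⟩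
  have key2 : ∀ y : ↥(S' ∩ A), (G'.induce (S' ∩ A)).Reachable ⟨a, haS, haA⟩ y := by
    rintro ⟨y, hyS, hyA⟩
    exact (key ⟨y, hyS⟩ ((reachable_iff_reflTransGen _ _).1 (hconn.preconnected _ _))).1 hyA
  haveI : Nonempty ↥(S' ∩ A) := ⟨⟨a, haS, haA⟩⟩
  exact ⟨fun x y => (key2 x).symm.trans (key2 y)⟩
end

section
/- Let η ≥ 1 and d', λ ∈ ℕ. Let G be a finite simple graph, let W ⊆ V(G) be an η-treedepth deletion set of G, and let H ⊆ W be such that every connected component C of G − W satisfies |N_G(C) ∖ H| ≤ d'. Call an η-treedepth deletion set S of G nice if for every T ⊆ W ∖ H the following holds: if the connected components C of G − W with N_G(C) ∖ H = T together contain more than λ vertices of S, then T ⊆ S. Then for every connected η-treedepth deletion set S of G with H ⊆ S, there exists a nice connected η-treedepth deletion set S' of G with S ⊆ S' and |S'| ≤ |S| + d'·(2^η + 1)·|S|/(λ + 1). -/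
open SimpleGraph Set

variable {V : Type*}

section helpers

variable {U : Type*} {G : SimpleGraph U}

lemma compIn_self {A : Set U} {x : U} (hx : x ∈ A) : x ∈ compIn G A x :=
  ⟨hx, hx, Reachable.refl _⟩

lemma compIn_sub {A : Set U} {x y : U} (h : y ∈ compIn G A x) : y ∈ A := by
  obtain ⟨_, hy, _⟩ := h
  exact hy

lemma compIn_left {A : Set U} {x y : U} (h : y ∈ compIn G A x) : x ∈ A := by
  obtain ⟨hx, _, _⟩ := h
  exact hx

lemma compIn_symm {A : Set U} {x y : U} (h : y ∈ compIn G A x) : x ∈ compIn G A y := by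
  obtain ⟨hx, hy, h⟩ := h
  exact ⟨hy, hx, h.symm⟩

lemma compIn_trans {A : Set U} {x y z : U} (h : y ∈ compIn G A x) (h' : z ∈ compIn G A y) :
    z ∈ compIn G A x := by
  obtain ⟨hx, hy, h⟩ := h
  obtain ⟨_, hz, h'⟩ := h'
  exact ⟨hx, hz, h.trans h'⟩

lemma compIn_mono_s9 {A B : Set U} (hAB : A ⊆ B) {x y : U} (h : y ∈ compIn G A x) :
    y ∈ compIn G B x := by
  obtain ⟨hx, hy, h⟩ := h
  exact ⟨hAB hx, hAB hy, h.map (SimpleGraph.induceHomOfLE G hAB).toHom⟩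

lemma compIn_adj {A : Set U} {x y : U} (hx : x ∈ A) (hy : y ∈ A) (h : G.Adj x y) :
    y ∈ compIn G A x :=
  ⟨hx, hy, Adj.reachable (by simpa using h)⟩

lemma compIn_ind {A : Set U} {x y : U} (p : U → Prop) (h : y ∈ compIn G A x) (h0 : p x)
    (hs : ∀ a b, a ∈ A → b ∈ A → G.Adj a b → p a → p b) : p y := by
  obtain ⟨hx, hy, ⟨w⟩⟩ := h
  have key : ∀ (a b : A) (w : (G.induce A).Walk a b), p a → p b := by
    intro a b w
    induction w with
    | nil => exact id
    | cons hadj _ ih => exact fun ha => ih (hs _ _ (Subtype.property _) (Subtype.property _)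
        (by simpa using hadj) ha)
  exact key _ _ w h0

lemma compIn_eq {A : Set U} {x y : U} (h : y ∈ compIn G A x) : compIn G A y = compIn G A x := by
  ext z
  exact ⟨fun hz => compIn_trans h hz, fun hz => compIn_trans (compIn_symm h) hz⟩

lemma tdLE_mono_s9 {n : ℕ} : ∀ {A B : Set U}, B ⊆ A → tdLE G n A → tdLE G n B := by
  induction n with
  | zero =>
    intro A B h hA
    simp only [tdLE] at *
    subst hA
    exact Set.subset_empty_iff.1 h
  | succ n ih =>
    intro A B h hA x hx
    obtain ⟨v, hv, hv'⟩ := hA x (h hx)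
    by_cases hvB : v ∈ compIn G B x
    · have hsub : compIn G B x \ {v} ⊆ compIn G A x \ {v} :=
        fun z hz => ⟨compIn_mono_s9 h hz.1, hz.2⟩
      exact ⟨v, hvB, ih hsub hv'⟩
    · have hsub : compIn G B x \ {x} ⊆ compIn G A x \ {v} := by
        intro z hz
        refine ⟨compIn_mono_s9 h hz.1, ?_⟩
        rintro rfl
        exact hvB hz.1
      exact ⟨x, compIn_self hx, ih hsub hv'⟩

lemma tdLE_succ {n : ℕ} : ∀ {A : Set U}, tdLE G n A → tdLE G (n+1) A := by
  induction n with
  | zero =>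
    intro A hA
    simp only [tdLE] at hA
    subst hA
    intro x hx
    exact absurd hx (by simp)
  | succ n ih =>
    intro A hA x hx
    obtain ⟨v, hv, hv'⟩ := hA x hx
    exact ⟨v, hv, ih hv'⟩

lemma tdLE_le {n m : ℕ} (h : n ≤ m) {A : Set U} (hA : tdLE G n A) : tdLE G m A := by
  induction h with
  | refl => exact hA
  | step _ ih => exact tdLE_succ ih

lemma tdLE_card [Fintype U] {n : ℕ} : ∀ {A : Set U}, A.ncard ≤ n → tdLE G n A := by
  induction n with
  | zero =>
    intro A hA
    simp only [tdLE]
    exact (Set.ncard_eq_zero (Set.toFinite _)).1 (by omega)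
  | succ n ih =>
    intro A hA x hx
    refine ⟨x, compIn_self hx, ih ?_⟩
    have h1 : (compIn G A x \ {x}).ncard < A.ncard :=
      Set.ncard_lt_ncard (Set.ssubset_iff_of_subset (fun z hz => compIn_sub hz.1) |>.2
        ⟨x, hx, by simp⟩) (Set.toFinite _)
    omega

lemma td_le_iff [Fintype U] {n : ℕ} {A : Set U} : td G A ≤ n ↔ tdLE G n A := by
  constructor
  · intro h
    have : tdLE G (td G A) A := Nat.sInf_mem (s := {n | tdLE G n A}) ⟨A.ncard, tdLE_card le_rfl⟩
    exact tdLE_le h this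
  · intro h
    exact Nat.sInf_le h

lemma short_path [Fintype U] {n : ℕ} : ∀ {A : Set U} {x y : U}, tdLE G n A → y ∈ compIn G A x →
    ∃ P : Set U, P ⊆ A ∧ x ∈ P ∧ y ∈ P ∧ (∀ z ∈ P, z ∈ compIn G P x) ∧ P.ncard < 2 ^ n := by
  induction n with
  | zero =>
    intro A x y hA h
    simp only [tdLE] at hA
    subst hA
    exact absurd (compIn_sub h) (by simp)
  | succ n ih =>
    intro A x y hA h
    obtain ⟨v, hv, hv'⟩ := hA x (compIn_left h)
    have half : ∀ z ∈ compIn G A x, ∃ P : Set U, P ⊆ A ∧ z ∈ P ∧ v ∈ P ∧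
        (∀ w ∈ P, w ∈ compIn G P v) ∧ (P \ {v}).ncard < 2 ^ n := by
      intro z hz
      by_cases hzv : z = v
      · subst hzv
        refine ⟨{z}, by simpa using compIn_sub hz, rfl, rfl, ?_, by simp⟩
        rintro w rfl
        exact compIn_self rfl
      · set K := compIn G A x with hK
        have hu : v ∈ K ∧ (v ∈ compIn G (K \ {v}) z ∨
            ∃ u ∈ compIn G (K \ {v}) z, G.Adj u v) := by
          refine compIn_ind (fun a => a ∈ K ∧ (a ∈ compIn G (K \ {v}) z ∨
            ∃ u ∈ compIn G (K \ {v}) z, G.Adj u v)) (compIn_trans (compIn_symm hz) hv)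
            ⟨hz, Or.inl (compIn_self ⟨hz, hzv⟩)⟩ ?_
          rintro a b ha hb hab ⟨haK, hp⟩
          have hbK : b ∈ K := compIn_trans haK (compIn_adj ha hb hab)
          refine ⟨hbK, ?_⟩
          rcases hp with hp | hp
          · by_cases hbv : b = v
            · subst hbv
              exact Or.inr ⟨a, hp, hab⟩
            · exact Or.inl (compIn_trans hp (compIn_adj (compIn_sub hp) ⟨hbK, hbv⟩ hab))
          · exact Or.inr hp
        rcases hu.2 with hu | ⟨u, hu, huv⟩
        · exact absurd rfl (compIn_sub hu).2
        · obtain ⟨P, hPA, hzP, huP, hPc, hcard⟩ := ih hv' hu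
          have hsub : P ⊆ insert v P := Set.subset_insert _ _
          have hvu : u ∈ compIn G (insert v P) v :=
            compIn_adj (Set.mem_insert _ _) (hsub huP) huv.symm
          refine ⟨insert v P, ?_, hsub hzP, Set.mem_insert _ _, ?_, ?_⟩
          · rintro w (rfl | hw)
            · exact compIn_sub hv
            · exact compIn_sub (hPA hw).1
          · rintro w (rfl | hw)
            · exact compIn_self (Set.mem_insert _ _)
            · exact compIn_trans hvu (compIn_mono_s9 hsub
                (compIn_trans (compIn_symm (hPc u huP)) (hPc w hw)))
          · refine lt_of_le_of_lt (Set.ncard_le_ncard ?_ (Set.toFinite _)) hcard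
            rintro w ⟨rfl | hw, hwv⟩
            · exact absurd rfl hwv
            · exact hw
    obtain ⟨P, hPA, hxP, hvP, hPc, hP⟩ := half x (compIn_self (compIn_left h))
    obtain ⟨Q, hQA, hyQ, hvQ, hQc, hQ⟩ := half y h
    have hvx : v ∈ compIn G (P ∪ Q) x := compIn_mono_s9 Set.subset_union_left (compIn_symm (hPc x hxP))
    refine ⟨P ∪ Q, Set.union_subset hPA hQA, Or.inl hxP, Or.inr hyQ, ?_, ?_⟩
    · rintro w (hw | hw)
      · exact compIn_trans hvx (compIn_mono_s9 Set.subset_union_left (hPc w hw))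
      · exact compIn_trans hvx (compIn_mono_s9 Set.subset_union_right (hQc w hw))
    · have h1 : P ∪ Q ⊆ insert v ((P \ {v}) ∪ (Q \ {v})) := by
        intro w hw
        by_cases hwv : w = v
        · exact Or.inl hwv
        · rcases hw with hw | hw
          · exact Or.inr (Or.inl ⟨hw, hwv⟩)
          · exact Or.inr (Or.inr ⟨hw, hwv⟩)
      have h2 := Set.ncard_le_ncard h1 (Set.toFinite _)
      have h3 := Set.ncard_insert_le v ((P \ {v}) ∪ (Q \ {v}))
      have h4 := Set.ncard_union_le (P \ {v}) (Q \ {v})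
      rw [pow_succ]
      omega

/-- The union of the components of `G[R]` whose neighborhood outside `H` is `T`. -/
def classU (G : SimpleGraph U) (R H T : Set U) : Set U :=
  ⋃₀ {C | IsCompOf G R C ∧ nbhd G C \ H = T}

lemma mem_classU {R H T : Set U} {z : U} :
    z ∈ classU G R H T ↔ z ∈ R ∧ nbhd G (compIn G R z) \ H = T := by
  constructor
  · rintro ⟨C, ⟨⟨x, hx, rfl⟩, hC⟩, hz⟩
    rw [compIn_eq hz]
    exact ⟨compIn_sub hz, hC⟩
  · rintro ⟨hz, h⟩
    exact ⟨_, ⟨⟨z, hz, rfl⟩, h⟩, compIn_self hz⟩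

lemma exists_attach [Fintype U] {η lam : ℕ} {W H S T : Set U} (hW : tdLE G η Wᶜ)
    (hT : lam < (S ∩ classU G Wᶜ H T).ncard) {t : U} (ht : t ∈ T) :
    ∃ Q : Set U, t ∈ Q ∧ (∀ z ∈ Q, z = t ∨ z ∈ classU G Wᶜ H T) ∧
      (∃ s ∈ S, ∀ z ∈ Q, z ∈ compIn G Q s) ∧ Q.ncard ≤ 2 ^ η + 1 := by
  have hne : (S ∩ classU G Wᶜ H T).Nonempty := by
    rw [← Set.ncard_pos (Set.toFinite _)]
    omega
  obtain ⟨s, hsS, hs⟩ := hne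
  obtain ⟨hsW, hsT⟩ := mem_classU.1 hs
  have ht' := ht
  rw [← hsT] at ht'
  obtain ⟨⟨_, u, hu, hut⟩, _⟩ := ht'
  obtain ⟨P, hPA, hsP, huP, hPc, hcard⟩ := short_path hW hu
  have hsub : P ⊆ insert t P := Set.subset_insert _ _
  refine ⟨insert t P, Set.mem_insert _ _, ?_, ⟨s, hsS, ?_⟩, ?_⟩
  · rintro z (rfl | hz)
    · exact Or.inl rfl
    · right
      rw [mem_classU, compIn_eq (compIn_mono_s9 hPA (hPc z hz))]
      exact ⟨hPA hz, hsT⟩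
  · rintro z (rfl | hz)
    · exact compIn_trans (compIn_mono_s9 hsub (hPc u huP))
        (compIn_adj (hsub huP) (Set.mem_insert _ _) hut)
    · exact compIn_mono_s9 hsub (hPc z hz)
  · have := Set.ncard_insert_le t P
    omega

end helpers

theorem stmt9 {V : Type*} [Fintype V] (η d' lam : ℕ) (hη : 1 ≤ η)
    (G : SimpleGraph V) (W : Set V) (hW : IsTDS G η W)
    (H : Set V) (hHW : H ⊆ W)
    (hnb : ∀ C, IsCompOf G Wᶜ C → (nbhd G C \ H).ncard ≤ d')
    (S : Set V) (hS : IsCTDS G η S) (hHS : H ⊆ S) :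
    ∃ S' : Set V,
      (∀ T ⊆ W \ H,
        lam < (S' ∩ ⋃₀ {C | IsCompOf G Wᶜ C ∧ nbhd G C \ H = T}).ncard → T ⊆ S') ∧
      IsCTDS G η S' ∧ S ⊆ S' ∧
      (S'.ncard : ℝ) ≤ (S.ncard : ℝ) +
        (d' : ℝ) * ((2 : ℝ) ^ η + 1) * (S.ncard : ℝ) / ((lam : ℝ) + 1) := by
  classical
  change ∃ S' : Set V, (∀ T ⊆ W \ H, lam < (S' ∩ classU G Wᶜ H T).ncard → T ⊆ S') ∧ _
  have hW' : tdLE G η Wᶜ := td_le_iff.1 hW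
  obtain ⟨hS1, hS2, hS3⟩ := hS
  have hS1' : tdLE G η Sᶜ := td_le_iff.1 hS1
  have hSc : ∀ a ∈ S, ∀ b ∈ S, b ∈ compIn G S a := fun a ha b hb => ⟨ha, hb, hS3.preconnected _ _⟩
  let Proc : Finset (Set V) := Finset.univ.filter
    (fun T => T ⊆ W \ H ∧ lam < (S ∩ classU G Wᶜ H T).ncard)
  have hProc : ∀ T, T ∈ Proc ↔ T ⊆ W \ H ∧ lam < (S ∩ classU G Wᶜ H T).ncard := by
    intro T
    simp [Proc]
  have hQ : ∀ (T : Set V) (t : V), ∃ Q : Set V, T ∈ Proc → t ∈ T →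
      t ∈ Q ∧ (∀ z ∈ Q, z = t ∨ z ∈ classU G Wᶜ H T) ∧
      (∃ s ∈ S, ∀ z ∈ Q, z ∈ compIn G Q s) ∧ Q.ncard ≤ 2 ^ η + 1 := by
    intro T t
    by_cases h : T ∈ Proc ∧ t ∈ T
    · obtain ⟨Q, hQ⟩ := exists_attach hW' ((hProc T).1 h.1).2 h.2
      exact ⟨Q, fun _ _ => hQ⟩
    · exact ⟨∅, fun h1 h2 => absurd ⟨h1, h2⟩ h⟩
  choose Q hQ using hQ
  let E : Finset V := Proc.biUnion (fun T => T.toFinset.biUnion (fun t => (Q T t).toFinset))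
  have hE : ∀ z, z ∈ E ↔ ∃ T ∈ Proc, ∃ t ∈ T, z ∈ Q T t := by
    intro z
    simp [E]
  have hTd : ∀ T ∈ Proc, T.ncard ≤ d' := by
    intro T hT
    have h1 := ((hProc T).1 hT).2
    have hne : (S ∩ classU G Wᶜ H T).Nonempty := by
      rw [← Set.ncard_pos (Set.toFinite _)]
      omega
    obtain ⟨s, _, hs⟩ := hne
    obtain ⟨hsW, hsT⟩ := mem_classU.1 hs
    rw [← hsT]
    exact hnb _ ⟨s, hsW, rfl⟩
  have hEcard : E.card ≤ Proc.card * (d' * (2 ^ η + 1)) := by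
    refine Finset.card_biUnion_le_card_mul _ _ _ (fun T hT => ?_)
    refine (Finset.card_biUnion_le_card_mul _ _ (2 ^ η + 1) (fun t ht => ?_)).trans ?_
    · rw [← Set.ncard_eq_toFinset_card']
      exact (hQ T t hT (by simpa using ht)).2.2.2
    · rw [← Set.ncard_eq_toFinset_card']
      exact Nat.mul_le_mul_right _ (hTd T hT)
  have hPcard : Proc.card * (lam + 1) ≤ S.ncard := by
    have h1 : (Proc.biUnion (fun T => (S ∩ classU G Wᶜ H T).toFinset)).card
        = ∑ T ∈ Proc, ((S ∩ classU G Wᶜ H T).toFinset).card := by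
      refine Finset.card_biUnion (fun T _ T' _ hne => ?_)
      rw [Function.onFun, Finset.disjoint_left]
      intro z hz hz'
      rw [Set.mem_toFinset] at hz hz'
      exact hne ((mem_classU.1 hz.2).2.symm.trans (mem_classU.1 hz'.2).2)
    have h2 : (Proc.biUnion (fun T => (S ∩ classU G Wᶜ H T).toFinset)).card ≤ S.toFinset.card := by
      refine Finset.card_le_card (fun z hz => ?_)
      rw [Finset.mem_biUnion] at hz
      obtain ⟨T, _, hz⟩ := hz
      rw [Set.mem_toFinset] at hz ⊢
      exact hz.1
    rw [Set.ncard_eq_toFinset_card']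
    refine le_trans ?_ (h1.symm.le.trans h2)
    rw [← smul_eq_mul]
    refine Finset.card_nsmul_le_sum _ _ _ (fun T hT => ?_)
    rw [← Set.ncard_eq_toFinset_card']
    exact ((hProc T).1 hT).2
  refine ⟨S ∪ ↑E, ?_, ⟨?_, hS2.mono Set.subset_union_left, ?_⟩, Set.subset_union_left, ?_⟩
  · intro T hTW hcard
    by_cases hT : T ∈ Proc
    · intro t ht
      exact Or.inr ((hE t).2 ⟨T, hT, t, ht, (hQ T t hT ht).1⟩)
    · exfalso
      apply hT
      refine (hProc T).2 ⟨hTW, lt_of_lt_of_le hcard (Set.ncard_le_ncard ?_ (Set.toFinite _))⟩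
      rintro z ⟨hz | hz, hzT⟩
      · exact ⟨hz, hzT⟩
      · exfalso
        obtain ⟨T', hT', t, ht, hz⟩ := (hE z).1 hz
        rcases (hQ T' t hT' ht).2.1 z hz with rfl | hz'
        · exact (mem_classU.1 hzT).1 (((hProc T').1 hT').1 ht).1
        · have : T' = T := (mem_classU.1 hz').2.symm.trans (mem_classU.1 hzT).2
          exact hT (this ▸ hT')
  · exact td_le_iff.2 (tdLE_mono_s9 (Set.compl_subset_compl.2 Set.subset_union_left) hS1')
  · obtain ⟨s0, hs0⟩ := hS2
    have key : ∀ z ∈ S ∪ (E : Set V), z ∈ compIn G (S ∪ (E : Set V)) s0 := by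
      rintro z (hz | hz)
      · exact compIn_mono_s9 Set.subset_union_left (hSc _ hs0 _ hz)
      · obtain ⟨T, hT, t, ht, hz⟩ := (hE z).1 hz
        obtain ⟨s, hs, hsQ⟩ := (hQ T t hT ht).2.2.1
        refine compIn_trans (compIn_mono_s9 Set.subset_union_left (hSc _ hs0 _ hs))
          (compIn_mono_s9 (fun w hw => Or.inr ((hE w).2 ⟨T, hT, t, ht, hw⟩)) (hsQ z hz))
    haveI : Nonempty ↑(S ∪ (E : Set V)) := ⟨⟨s0, Or.inl hs0⟩⟩
    refine ⟨fun a b => ?_⟩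
    obtain ⟨_, _, h⟩ := compIn_trans (compIn_symm (key a a.2)) (key b b.2)
    exact h
  · have h1 : (S ∪ (E : Set V)).ncard ≤ S.ncard + Proc.card * (d' * (2 ^ η + 1)) := by
      refine (Set.ncard_union_le _ _).trans ?_
      rw [Set.ncard_coe_finset]
      omega
    have h1' : ((S ∪ (E : Set V)).ncard : ℝ) ≤ S.ncard + Proc.card * (d' * (2 ^ η + 1)) := by
      exact_mod_cast h1
    have h2 : (Proc.card : ℝ) * (lam + 1) ≤ S.ncard := by exact_mod_cast hPcard
    refine h1'.trans (add_le_add le_rfl ?_)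
    rw [le_div_iff₀ (by positivity)]
    calc (Proc.card : ℝ) * (d' * (2 ^ η + 1)) * (lam + 1)
        = d' * (2 ^ η + 1) * (Proc.card * (lam + 1)) := by ring
      _ ≤ _ := by gcongr
end
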